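/- Let n ≥ 1 and let F(x) = x^d be the power function over GF(5^n) with d = (5^n − 3)/2, and let Γ = Σ_{x ∈ GF(5^n)} χ(x³ − x), where χ is the quadratic character of GF(5^n). If n is even, the (−1)-differential spectrum of F is given by ω_0 = −Γ/8 + (3·5^n − 5)/8, ω_1 = Γ/4 + (5^n + 5)/4, ω_2 = −Γ/8 + (3·5^n − 5)/8, and ω_i = 0 for i ≥ 3. If n is odd, the (−1)-differential spectrum of F is given by ω_0 = −Γ/8 + (3·5^n − 13)/8, ω_1 = Γ/4 + (5^n + 13)/4, ω_2 = −Γ/8 + (3·5^n − 13)/8, and ω_i = 0 for i ≥ 3. -/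

import Mathlib

/-!
Write `q = 5 ^ n` and let `χ` be the quadratic character. Since `x ^ d = χ(x) x⁻¹`, a solution
`x ≠ 0, -1` of `(x + 1) ^ d + x ^ d = b` satisfies `u x + v (x + 1) = b x (x + 1)` with
`u = χ(x + 1)` and `v = χ(x)`. The reflection `x ↦ -1 - x` exchanges `u` and `v` up to `χ(-1) = 1`,
so only two counts remain (`cdelta_eq`).

* For `u = v`: roots `y` of `b y ^ 2 + (b - 2) y - 1` with `χ(y (y + 1)) = 1`. The discriminant is
  `b ^ 2 - 1` in characteristic five, and the identity behind `chi_root` shows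
  `χ(y (y + 1)) = χ(b + 1)` for each root. Hence the count is `2` if `χ(b + 1) = χ(b - 1) = 1` and
  `0` otherwise, for `b ≠ 0, 1, -1` (`equalCount_eq`).
* For `u ≠ v`: solutions of `c x (x + 1) = -1` with `c = b` or `c = -b`. The two roots are exchanged
  by the reflection, so there is one admissible root exactly when `χ(c) = χ(c + 1) = -1`
  (`mixedCount_eq`).

Hence every fibre has at most two points. For `b ≠ 0, 1, -1` the fibre is a single point exactly
when `χ(b) = χ(b ^ 2 - 1) = -1`, that is when `(1 - χ(b)) (1 - χ(b ^ 2 - 1)) = 4`; the fibre over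
`0` is a single point, and those over `1` and `-1` have one or two points depending on `χ(2)`
(`cdelta_spec`). Summing over `b` with `∑ χ(b) = 0` and `∑ χ(b ^ 2 - 1) = -1` gives `ω_1`, and
counting `F` by values and by arguments gives `ω_0 = ω_2`.
-/

open Finset

/-- `cdelta F d c b` is the number of `x` in the finite field `F` with
`(x+1)^d - c * x^d = b`, i.e. the entry `δ_c(b)` of the `c`-DDT of `x ↦ x^d`. -/
noncomputable def cdelta (F : Type*) [Field F] (d : ℕ) (c b : F) : ℕ :=
  Nat.card {x : F // (x + 1) ^ d - c * x ^ d = b}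

/-- `comega F d c i` is the number of `b` in `F` with `δ_c(b) = i`,
i.e. the value `ω_i` of the `c`-differential spectrum of `x ↦ x^d`. -/
noncomputable def comega (F : Type*) [Field F] (d : ℕ) (c : F) (i : ℕ) : ℕ :=
  Nat.card {b : F // cdelta F d c b = i}

open scoped Classical in
/-- The quadratic character of `F`, valued in `ℤ`. -/
noncomputable def chi (F : Type*) [Field F] (x : F) : ℤ :=
  if x = 0 then 0 else if IsSquare x then 1 else -1

/-! ### The quadratic character in characteristic five -/

section
variable {F : Type*} [Field F]

lemma chi_zero : chi F 0 = 0 := by simp [chi]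

lemma chi_sq {x : F} (hx : x ≠ 0) : chi F (x ^ 2) = 1 := by
  have : IsSquare (x ^ 2) := ⟨x, sq x⟩
  rw [chi, if_neg (pow_ne_zero 2 hx), if_pos this]

lemma chi_one : chi F 1 = 1 := by simpa using chi_sq (one_ne_zero (α := F))

lemma two_ne_zero_of_five (h5 : (5 : F) = 0) : (2 : F) ≠ 0 := fun h =>
  one_ne_zero (α := F) (by linear_combination h5 - 2 * h)

lemma chi_cases {x : F} (hx : x ≠ 0) : chi F x = 1 ∨ chi F x = -1 := by
  by_cases hs : IsSquare x <;> simp [chi, hx, hs]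

lemma ne_zero_of_chi {x : F} (h : chi F x = 1 ∨ chi F x = -1) : x ≠ 0 := by
  rintro rfl; simp [chi_zero] at h

lemma exists_sqrt {x : F} (h : chi F x = 1) : ∃ t, t ^ 2 = x := by
  by_cases hs : IsSquare x
  · obtain ⟨t, rfl⟩ := hs
    exact ⟨t, sq t⟩
  · by_cases h0 : x = 0 <;> simp [chi, hs, h0] at h

section
variable [Fintype F]

open scoped Classical in
lemma chi_eq_quadraticChar (x : F) : chi F x = quadraticChar F x := by
  rw [quadraticChar_apply, quadraticCharFun, chi]
  split_ifs <;> rfl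

lemma chi_mul (x y : F) : chi F (x * y) = chi F x * chi F y := by
  classical
  simp only [chi_eq_quadraticChar, map_mul]

/-- Over a field with `5 = 0`, `-1 = 2 ^ 2` is a square. -/
lemma chi_neg (h5 : (5 : F) = 0) (x : F) : chi F (-x) = chi F x := by
  have h2 : (2 : F) ≠ 0 := two_ne_zero_of_five h5
  have : -x = 2 ^ 2 * x := by linear_combination -x * h5
  rw [this, chi_mul, chi_sq h2, one_mul]

lemma pow_eq_chi (h2 : ringChar F ≠ 2) {d : ℕ} (hd0 : d ≠ 0) (hd : d + 1 = Fintype.card F / 2)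
    (x : F) : x ^ d = (chi F x : F) * x⁻¹ := by
  classical
  rcases eq_or_ne x 0 with rfl | hx
  · simp [hd0]
  · rw [chi_eq_quadraticChar, quadraticChar_eq_pow_of_char_ne_two' h2, ← hd, pow_succ,
      mul_inv_cancel_right₀ hx]

lemma sum_chi (h2 : ringChar F ≠ 2) : ∑ x : F, chi F x = 0 := by
  classical
  simp only [chi_eq_quadraticChar]
  exact quadraticChar_sum_zero h2

/-- The sum is the Jacobi sum `J(χ, χ⁻¹)` after the substitution `x = (t + 1) / 2`. -/
lemma sum_chi_sq_sub_one (h2 : ringChar F ≠ 2) (h5 : (5 : F) = 0) :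
    ∑ x : F, chi F (x ^ 2 - 1) = -1 := by
  classical
  have h20 : (2 : F) ≠ 0 := two_ne_zero_of_five h5
  have h := jacobiSum_nontrivial_inv (quadraticChar_ne_one h2)
  rw [(quadraticChar_isQuadratic F).inv, ← chi_eq_quadraticChar, chi_neg h5,
    chi_eq_quadraticChar, map_one, jacobiSum] at h
  rw [← h, ← Equiv.sum_comp ((Equiv.mulLeft₀ (2 : F) h20).trans (Equiv.subRight 1))]
  refine Finset.sum_congr rfl fun x _ => ?_
  rw [← chi_eq_quadraticChar, ← chi_eq_quadraticChar, ← chi_mul, ← chi_neg h5,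
    ← one_mul (chi F (x * _)), ← chi_sq h20, ← chi_mul]
  congr 1
  simp
  ring

/-! ### Sorting the solutions by quadratic characters -/

open scoped Classical in
/-- The number of roots `y` of `b y ^ 2 + (b - 2) y - 1` with `χ(y) χ(y + 1) = 1`. -/
noncomputable def equalCount (b : F) : ℕ :=
  #{y : F | b * y ^ 2 + (b - 2) * y - 1 = 0 ∧ chi F y * chi F (y + 1) = 1}

open scoped Classical in
/-- The number of solutions `x` of `c x (x + 1) = -1` with `χ(x) = -1` and `χ(x + 1) = 1`. -/
noncomputable def mixedCount (c : F) : ℕ :=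
  #{x : F | c * (x * (x + 1)) = -1 ∧ chi F x = -1 ∧ chi F (x + 1) = 1}

open scoped Classical in
/-- The solutions of `(x + 1) ^ d + x ^ d = b` sorted by `(χ(x + 1), χ(x))`. The points `0` and `-1`
give the first two terms. For the types `(-1, -1)` and `(-1, 1)` the substitution `x ↦ -1 - x`
turns the equation into that of type `(1, 1)`, respectively into that of type `(1, -1)` with `-b`
in place of `b`. -/
lemma cdelta_eq (h5 : (5 : F) = 0) {d : ℕ} (hd : ∀ x : F, x ^ d = (chi F x : F) * x⁻¹) (b : F) :
    cdelta F d (-1) b = (if b = 1 then 1 else 0) + (if b = -1 then 1 else 0) + equalCount b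
      + mixedCount b + mixedCount (-b) := by
  have hone : chi F 1 = 1 := chi_one
  let P : F → Prop := fun y => b * y ^ 2 + (b - 2) * y - 1 = 0
  have refl : ∀ f : F → ℕ, ∑ x, f (-1 - x) = ∑ x, f x := fun f =>
    (Equiv.subLeft (-1 : F)).sum_comp f
  have hU : equalCount b = ∑ x : F, ((if P x ∧ chi F x = 1 ∧ chi F (x + 1) = 1 then 1 else 0)
      + if P (-1 - x) ∧ chi F x = -1 ∧ chi F (x + 1) = -1 then 1 else 0) := by
    rw [Finset.sum_add_distrib, ← refl fun x => if P (-1 - x) ∧ _ then 1 else 0,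
      ← Finset.sum_add_distrib, equalCount, Finset.card_filter]
    refine Finset.sum_congr rfl fun y _ => ?_
    have e1 : chi F (-1 - y) = chi F (y + 1) := by rw [← chi_neg h5]; congr 1; ring
    have e2 : chi F (-1 - y + 1) = chi F y := by rw [← chi_neg h5]; congr 1; ring
    have e3 : -1 - (-1 - y) = y := by ring
    rw [e1, e2, e3]
    rcases eq_or_ne y 0 with rfl | h0
    · simp [chi_zero]
    rcases eq_or_ne (y + 1) 0 with h1 | h1
    · simp [h1, chi_zero]
    rcases chi_cases h0 with h0 | h0 <;> rcases chi_cases h1 with h1 | h1 <;> simp [h0, h1, P]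
  have hM : mixedCount (-b) =
      ∑ x : F, if b * (x * (x + 1)) = 1 ∧ chi F x = 1 ∧ chi F (x + 1) = -1 then 1 else 0 := by
    rw [← refl, mixedCount, Finset.card_filter]
    refine Finset.sum_congr rfl fun y _ => ?_
    have e1 : chi F (-1 - y) = chi F (y + 1) := by rw [← chi_neg h5]; congr 1; ring
    have e2 : chi F (-1 - y + 1) = chi F y := by rw [← chi_neg h5]; congr 1; ring
    have e3 : (-1 - y) * (-1 - y + 1) = y * (y + 1) := by ring
    rw [e1, e2, e3, neg_mul, neg_inj]
    congr 1
    exact propext (by tauto)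
  have h0 : (if b = 1 then 1 else 0) = ∑ x : F, if x = 0 then if b = 1 then 1 else 0 else 0 := by
    simp
  have h1 : (if b = -1 then 1 else 0) =
      ∑ x : F, if x = -1 then if b = -1 then 1 else 0 else 0 := by
    simp
  rw [hU, hM, h0, h1, mixedCount, cdelta, Nat.card_eq_fintype_card, Fintype.card_subtype,
    Finset.card_filter, Finset.card_filter, ← Finset.sum_add_distrib, ← Finset.sum_add_distrib,
    ← Finset.sum_add_distrib, ← Finset.sum_add_distrib]
  refine Finset.sum_congr rfl fun x _ => ?_
  rw [hd, hd]
  rcases eq_or_ne x 0 with rfl | hx0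
  · simp [chi_zero, hone, eq_comm]
  rcases eq_or_ne x (-1) with rfl | hx1
  · have : chi F (-1) = 1 := by rw [chi_neg h5, hone]
    simp [chi_zero, this, inv_neg, eq_comm]
  have hx1' : x + 1 ≠ 0 := fun h => hx1 (eq_neg_of_add_eq_zero_left h)
  -- clearing denominators in `u / (x + 1) + v / x = b`
  have key : ∀ u v : F, (u * (x + 1)⁻¹ - -1 * (v * x⁻¹) = b ↔
      u * x + v * (x + 1) = b * (x * (x + 1))) := fun u v => by
    field_simp
    constructor <;> intro h <;> linear_combination h
  rw [key]
  rcases chi_cases hx0 with c0 | c0 <;> rcases chi_cases hx1' with c1 | c1 <;>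
    norm_num [hx0, hx1, c0, c1, P]
  · congr 1
    exact propext ⟨fun h => by linear_combination -h, fun h => by linear_combination -h⟩
  · congr 1
    exact propext ⟨fun h => by linear_combination -h, fun h => by linear_combination -h⟩
  · congr 1
    exact propext ⟨fun h => by linear_combination -h, fun h => by linear_combination -h⟩
  · congr 1
    exact propext ⟨fun h => by linear_combination -h, fun h => by linear_combination -h⟩

/-! ### Evaluation of the two counts -/

open scoped Classical in
/-- Of the two roots `x`, `-1 - x` exactly one has the required characters, as soon as
`χ(x (x + 1)) = χ(c) = -1`; they exist when the discriminant `c ^ 2 - 4 c = c (c + 1)` is a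
square. -/
lemma mixedCount_eq (h5 : (5 : F) = 0) (c : F) :
    mixedCount c = if chi F c = -1 ∧ chi F (c + 1) = -1 then 1 else 0 := by
  have h20 : (2 : F) ≠ 0 := two_ne_zero_of_five h5
  have hone : chi F 1 = 1 := chi_one
  split_ifs with h
  · obtain ⟨hc, hc1⟩ := h
    have hc0 : c ≠ 0 := ne_zero_of_chi (.inr hc)
    obtain ⟨t, ht⟩ := exists_sqrt (x := c * (c + 1)) (by rw [chi_mul, hc, hc1]; rfl)
    obtain ⟨r, hr⟩ : ∃ r, r = (t - c) / (2 * c) := ⟨_, rfl⟩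
    have hr' : 2 * c * r = t - c := by rw [hr]; field_simp
    have hroot : c * (r * (r + 1)) = -1 := by
      refine mul_left_cancel₀ (mul_ne_zero (mul_ne_zero h20 h20) hc0) ?_
      linear_combination (2 * c * r + t + c) * hr' + ht + c * h5
    have hchi : chi F r * chi F (r + 1) = -1 := by
      have := congrArg (chi F) hroot
      rw [chi_mul, chi_mul, hc, chi_neg h5, hone] at this
      linarith
    obtain ⟨s, hs, hs0, hs1⟩ : ∃ s, c * (s * (s + 1)) = -1 ∧ chi F s = -1 ∧ chi F (s + 1) = 1 := by
      have hr0 : r ≠ 0 := by rintro rfl; simp [chi_zero] at hchi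
      rcases chi_cases hr0 with h0 | h0
      · refine ⟨-1 - r, by linear_combination hroot, ?_, ?_⟩
        · rw [h0] at hchi
          rw [← chi_neg h5, ← one_mul (chi F _), ← hchi]; congr 2; ring
        · rw [← chi_neg h5, ← h0]; congr 1; ring
      · exact ⟨r, hroot, h0, by rw [h0] at hchi; linarith⟩
    rw [mixedCount, Finset.card_eq_one]
    refine ⟨s, Finset.ext fun x => ?_⟩
    simp only [mem_filter, mem_univ, true_and, mem_singleton]
    refine ⟨fun ⟨hx, hx0, hx1⟩ => ?_, fun hx => hx ▸ ⟨hs, hs0, hs1⟩⟩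
    have : (x - s) * (x + s + 1) = 0 := mul_left_cancel₀ hc0 (by linear_combination hx - hs)
    rcases mul_eq_zero.1 this with e | e
    · exact sub_eq_zero.1 e
    · have : x = -(s + 1) := by linear_combination e
      rw [this, chi_neg h5, hs1] at hx0
      norm_num at hx0
  · rw [mixedCount, Finset.card_eq_zero, Finset.filter_eq_empty_iff]
    rintro x - ⟨hx, hx0, hx1⟩
    have hc : chi F c = -1 := by
      have := congrArg (chi F) hx
      rw [chi_mul, chi_mul, hx0, hx1, chi_neg h5, hone] at this
      linarith
    refine h ⟨hc, ?_⟩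
    have hc1 : c + 1 ≠ 0 := fun e => by
      rw [eq_neg_of_add_eq_zero_left e, chi_neg h5, hone] at hc
      norm_num at hc
    have hsq : c * (c + 1) = (2 * c * x + c) ^ 2 := by
      linear_combination -4 * c * hx + c * h5
    have hne : 2 * c * x + c ≠ 0 := fun e => by
      rw [e, zero_pow two_ne_zero] at hsq
      exact mul_ne_zero (ne_zero_of_chi (.inr hc)) hc1 hsq
    have := congrArg (chi F) hsq
    rw [chi_mul, chi_sq hne, hc] at this
    linarith

/-- With `s = b (2 y + 1) - 2` one has `s ^ 2 = b ^ 2 - 1` and `b ^ 2 y (y + 1) = s + 2`. The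
relation `s ^ 2 + 1 = b ^ 2` then gives `b ^ 2 = (s + 2) (s - 2)` and
`4 (b + 1) (s - 2) = (1 + b + 2 s) ^ 2`, so `(b + 1) y (y + 1)` is a nonzero square. -/
lemma chi_root (h5 : (5 : F) = 0) {b y : F} (hb : b ≠ 0) (hb1 : b + 1 ≠ 0)
    (hy : b * y ^ 2 + (b - 2) * y - 1 = 0) :
    chi F (b + 1) * (chi F y * chi F (y + 1)) = 1 := by
  have h20 : (2 : F) ≠ 0 := two_ne_zero_of_five h5
  obtain ⟨s, hs⟩ : ∃ s, s = b * (2 * y + 1) - 2 := ⟨_, rfl⟩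
  have h1 : s ^ 2 = b ^ 2 - 1 := by rw [hs]; linear_combination 4 * b * hy + h5
  have h2 : b ^ 2 * (y * (y + 1)) = s + 2 := by linear_combination b * hy - hs
  have hsq : (b + 1) * (y * (y + 1)) * (2 * b ^ 2) ^ 2 = ((s + 2) * (1 + b + 2 * s)) ^ 2 := by
    linear_combination 4 * b ^ 2 * (b + 1) * h2 - 4 * (b + 1) * (s + 2) * h1 + (s + 2) ^ 2 * h1
      + (4 * (b + 1) * (s + 2) - (s + 2) ^ 2 * (2 + 2 * b + s ^ 2)) * h5
  have hy0 : y ≠ 0 := by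
    rintro rfl; exact one_ne_zero (α := F) (by linear_combination -hy)
  have hy1 : y + 1 ≠ 0 := fun h =>
    one_ne_zero (α := F) (by linear_combination hy - (b * y - 2) * h)
  have h2b : 2 * b ^ 2 ≠ 0 := mul_ne_zero h20 (pow_ne_zero 2 hb)
  have hne : (s + 2) * (1 + b + 2 * s) ≠ 0 := fun e => by
    rw [e, zero_pow two_ne_zero] at hsq
    exact mul_ne_zero (mul_ne_zero hb1 (mul_ne_zero hy0 hy1)) (pow_ne_zero 2 h2b) hsq
  have := congrArg (chi F) hsq
  rwa [chi_mul, chi_mul, chi_mul, chi_sq hne, chi_sq h2b, mul_one] at this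

open scoped Classical in
lemma equalCount_eq (h5 : (5 : F) = 0) {b : F} (hb : b ≠ 0) (hb1 : b + 1 ≠ 0) (hb2 : b - 1 ≠ 0) :
    equalCount b = if chi F (b + 1) = 1 ∧ chi F (b - 1) = 1 then 2 else 0 := by
  have h20 : (2 : F) ≠ 0 := two_ne_zero_of_five h5
  have hdisc : b ^ 2 - 1 = (b + 1) * (b - 1) := by ring
  split_ifs with h
  · obtain ⟨s, hs⟩ := exists_sqrt (x := b ^ 2 - 1) (by rw [hdisc, chi_mul, h.1, h.2]; rfl)
    have hs0 : s ≠ 0 := by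
      rintro rfl
      exact mul_ne_zero hb1 hb2 (by linear_combination -hs)
    rw [equalCount, Finset.card_eq_two]
    refine ⟨(2 - b + s) / (2 * b), (2 - b - s) / (2 * b), fun e => ?_, Finset.ext fun y => ?_⟩
    · field_simp at e
      exact mul_ne_zero h20 hs0 (by linear_combination e)
    · have h2b := mul_ne_zero h20 hb
      simp only [mem_filter, mem_univ, true_and, mem_insert, mem_singleton, eq_div_iff h2b]
      have hfac : b * y ^ 2 + (b - 2) * y - 1 = 0 ↔
          (y * (2 * b) - (2 - b + s)) * (y * (2 * b) - (2 - b - s)) = 0 := by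
        constructor
        · intro e
          linear_combination 4 * b * e - hs + h5
        · intro e
          refine (mul_eq_zero_iff_left (mul_ne_zero (mul_ne_zero h20 h20) hb)).1 ?_
          linear_combination e + hs - h5
      rw [← sub_eq_zero (b := 2 - b + s), ← sub_eq_zero (b := 2 - b - s), ← mul_eq_zero, ← hfac,
        and_iff_left_iff_imp]
      intro hy
      have := chi_root h5 hb hb1 hy
      rwa [h.1, one_mul] at this
  · rw [equalCount, Finset.card_eq_zero, Finset.filter_eq_empty_iff]
    rintro y - ⟨hy, hchi⟩
    have h1 := chi_root h5 hb hb1 hy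
    rw [hchi, mul_one] at h1
    refine h ⟨h1, ?_⟩
    -- the discriminant `(b - 2) ^ 2 + 4 b` is `b ^ 2 - 1` in characteristic five
    have hsq : (b + 1) * (b - 1) = (b * (2 * y + 1) - 2) ^ 2 := by
      linear_combination -4 * b * hy - h5
    have hne : b * (2 * y + 1) - 2 ≠ 0 := fun e => by
      rw [e, zero_pow two_ne_zero] at hsq
      exact mul_ne_zero hb1 hb2 hsq
    have := congrArg (chi F) hsq
    rwa [chi_mul, chi_sq hne, h1, one_mul] at this

open scoped Classical in
/-- When the quadratic degenerates to a single root `r`, only the character condition at `r` is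
left. -/
lemma equalCount_of_root {b r : F}
    (h : ∀ y : F, b * y ^ 2 + (b - 2) * y - 1 = 0 ↔ y = r) :
    equalCount b = if chi F r * chi F (r + 1) = 1 then 1 else 0 := by
  simp only [equalCount, h]
  split_ifs with hr
  · rw [Finset.card_eq_one]
    refine ⟨r, Finset.ext fun y => ?_⟩
    simp only [mem_filter, mem_univ, true_and, mem_singleton, and_iff_left_iff_imp]
    rintro rfl
    exact hr
  · rw [Finset.card_eq_zero, Finset.filter_eq_empty_iff]
    rintro y - ⟨rfl, hy⟩
    exact hr hy

lemma chi_two_mul_chi_two (h5 : (5 : F) = 0) : chi F 2 * chi F 2 = 1 := by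
  have h20 : (2 : F) ≠ 0 := two_ne_zero_of_five h5
  rw [← chi_mul, ← sq, chi_sq h20]

lemma equalCount_zero (h5 : (5 : F) = 0) : equalCount (0 : F) = 1 := by
  have h20 : (2 : F) ≠ 0 := two_ne_zero_of_five h5
  rw [equalCount_of_root (r := 2) fun y => ?_, if_pos]
  · have : (2 + 1 : F) = -2 := by linear_combination h5
    rw [this, chi_neg h5, chi_two_mul_chi_two h5]
  · constructor
    · intro h
      exact mul_left_cancel₀ h20 (by linear_combination -h - h5)
    · rintro rfl
      linear_combination -h5

open scoped Classical in
lemma equalCount_one (h5 : (5 : F) = 0) :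
    equalCount (1 : F) = if chi F 2 = 1 then 1 else 0 := by
  have h20 : (2 : F) ≠ 0 := two_ne_zero_of_five h5
  rw [equalCount_of_root (r := -2) fun y => ?_]
  · have h1 : chi F 1 = 1 := chi_one
    have : (-2 + 1 : F) = -1 := by ring
    rw [this, chi_neg h5, chi_neg h5, h1, mul_one]
  · constructor
    · intro h
      exact eq_neg_of_add_eq_zero_left (pow_eq_zero_iff two_ne_zero |>.1
        (by linear_combination h + (y + 1) * h5))
    · rintro rfl
      linear_combination h5

open scoped Classical in
lemma equalCount_neg_one (h5 : (5 : F) = 0) :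
    equalCount (-1 : F) = if chi F 2 = 1 then 1 else 0 := by
  rw [equalCount_of_root (r := 1) fun y => ?_]
  · have h1 : chi F 1 = 1 := chi_one
    rw [h1, one_mul, one_add_one_eq_two]
  · constructor
    · intro h
      exact sub_eq_zero.1 (pow_eq_zero_iff two_ne_zero |>.1
        (by linear_combination -h - y * h5))
    · rintro rfl
      linear_combination -h5

/-! ### The spectrum -/

open scoped Classical in
/-- Every fibre has at most two points, and the fibres with exactly one point are cut out by
`χ(b) = χ(b ^ 2 - 1) = -1` apart from `b = 0, 1, -1`. -/
lemma cdelta_spec (h5 : (5 : F) = 0) {d : ℕ} (hd : ∀ x : F, x ^ d = (chi F x : F) * x⁻¹) (b : F) :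
    cdelta F d (-1) b ≤ 2 ∧ 4 * (if cdelta F d (-1) b = 1 then 1 else 0 : ℤ) =
      1 - chi F b - chi F (b ^ 2 - 1) + chi F (b ^ 3 - b) + (if b = 0 then 4 else 0)
        + (if b = 1 then 2 * (1 - chi F 2) else 0) + (if b = -1 then 2 * (1 - chi F 2) else 0) := by
  have h20 : (2 : F) ≠ 0 := two_ne_zero_of_five h5
  have hone : chi F 1 = 1 := chi_one
  have hneg : chi F (-1) = 1 := by rw [chi_neg h5, hone]
  have h11 : (1 : F) ≠ -1 := fun h => h20 (by linear_combination h)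
  have hδ := cdelta_eq h5 hd b
  rcases eq_or_ne b 0 with rfl | hb
  · simp [mixedCount_eq h5, equalCount_zero h5, chi_zero, eq_comm] at hδ
    simp [hδ, hneg, chi_zero]
  rcases eq_or_ne b 1 with rfl | hb1
  · simp [mixedCount_eq h5, equalCount_one h5, hone, hneg, h11] at hδ
    rcases chi_cases h20 with h2 | h2 <;> simp [hδ, h2, chi_zero, hone, h11]
  rcases eq_or_ne b (-1) with rfl | hb2
  · simp [mixedCount_eq h5, equalCount_neg_one h5, hone, hneg, h11.symm] at hδ
    rcases chi_cases h20 with h2 | h2 <;>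
      norm_num [hδ, h2, chi_zero, hone, hneg, h11.symm, Odd.neg_pow]
  have hb1' : b - 1 ≠ 0 := sub_ne_zero.2 hb1
  have hb2' : b + 1 ≠ 0 := fun h => hb2 (eq_neg_of_add_eq_zero_left h)
  have e1 : chi F (-b + 1) = chi F (b - 1) := by rw [← chi_neg h5]; congr 1; ring
  have e2 : chi F (b ^ 2 - 1) = chi F (b + 1) * chi F (b - 1) := by rw [← chi_mul]; congr 1; ring
  have e3 : chi F (b ^ 3 - b) = chi F b * (chi F (b + 1) * chi F (b - 1)) := by
    rw [← chi_mul, ← chi_mul]; congr 1; ring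
  rw [equalCount_eq h5 hb hb2' hb1', mixedCount_eq h5, mixedCount_eq h5, e1, chi_neg h5] at hδ
  rw [e2, e3, hδ]
  rcases chi_cases hb with c | c <;> rcases chi_cases hb1' with c1 | c1 <;>
    rcases chi_cases hb2' with c2 | c2 <;> simp [c, c1, c2, hb, hb1, hb2]

open scoped Classical in
lemma comega_eq (d : ℕ) (c : F) (i : ℕ) :
    (comega F d c i : ℤ) = ∑ b : F, if cdelta F d c b = i then 1 else 0 := by
  rw [comega, Nat.card_eq_fintype_card, Fintype.card_subtype, Finset.card_filter]
  push_cast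
  rfl

lemma sum_cdelta (d : ℕ) (c : F) : ∑ b : F, cdelta F d c b = Fintype.card F := by
  classical
  simp only [cdelta, Nat.card_eq_fintype_card, Fintype.card_subtype]
  exact (Finset.card_eq_sum_card_fiberwise fun _ _ => Finset.mem_univ _).symm

/-- The total count `∑ ω_i = ∑ i ω_i = q` forces `ω_0 = ω_2`, and summing the formula of
`cdelta_spec` gives `ω_1`. The answer is stated through `χ(2)`, which is `1` or `-1`
according to the parity of the degree of `F` over its prime field. -/
lemma comega_spectrum (h2 : ringChar F ≠ 2) (h5 : (5 : F) = 0) {d : ℕ}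
    (hd : ∀ x : F, x ^ d = (chi F x : F) * x⁻¹) :
    4 * (comega F d (-1) 1 : ℤ) = ∑ x : F, chi F (x ^ 3 - x) + Fintype.card F + 9 - 4 * chi F 2 ∧
      comega F d (-1) 0 = comega F d (-1) 2 ∧
      comega F d (-1) 0 + comega F d (-1) 1 + comega F d (-1) 2 = Fintype.card F ∧
      ∀ i, 3 ≤ i → comega F d (-1) i = 0 := by
  classical
  have hle := fun b => (cdelta_spec h5 hd b).1
  have h3 : comega F d (-1) 0 + comega F d (-1) 1 + comega F d (-1) 2 = Fintype.card F := by
    zify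
    rw [comega_eq, comega_eq, comega_eq, ← Finset.sum_add_distrib, ← Finset.sum_add_distrib,
      ← Finset.card_univ, Finset.cast_card]
    refine Finset.sum_congr rfl fun b _ => ?_
    have := hle b
    interval_cases cdelta F d (-1) b <;> rfl
  have h4 : comega F d (-1) 1 + 2 * comega F d (-1) 2 = Fintype.card F := by
    rw [← sum_cdelta d (-1)]
    zify
    rw [comega_eq, comega_eq, Finset.mul_sum, ← Finset.sum_add_distrib]
    refine Finset.sum_congr rfl fun b _ => ?_
    have := hle b
    interval_cases cdelta F d (-1) b <;> rfl
  refine ⟨?_, by omega, h3, fun i hi => ?_⟩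
  · rw [comega_eq, Finset.mul_sum, Finset.sum_congr rfl fun b _ => (cdelta_spec h5 hd b).2]
    simp only [Finset.sum_add_distrib, Finset.sum_sub_distrib, sum_chi h2,
      sum_chi_sq_sub_one h2 h5, Finset.sum_ite_eq', Finset.mem_univ, if_true]
    simp
    ring
  · have : (comega F d (-1) i : ℤ) = 0 := by
      rw [comega_eq]
      exact Finset.sum_eq_zero fun b _ => if_neg (by have := hle b; omega)
    exact_mod_cast this

end
end

theorem stmt_19 (n : ℕ) (hn : 1 ≤ n)
    (F : Type*) [Field F] [Fintype F] (hF : Fintype.card F = 5 ^ n)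
    (Γ : ℤ) (hΓ : Γ = ∑ x : F, chi F (x ^ 3 - x)) :
    (Even n →
      8 * (comega F ((5 ^ n - 3) / 2) (-1 : F) 0 : ℤ) = 3 * 5 ^ n - 5 - Γ ∧
      4 * (comega F ((5 ^ n - 3) / 2) (-1 : F) 1 : ℤ) = Γ + 5 ^ n + 5 ∧
      8 * (comega F ((5 ^ n - 3) / 2) (-1 : F) 2 : ℤ) = 3 * 5 ^ n - 5 - Γ ∧
      ∀ i, 3 ≤ i → comega F ((5 ^ n - 3) / 2) (-1 : F) i = 0) ∧
    (Odd n →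
      8 * (comega F ((5 ^ n - 3) / 2) (-1 : F) 0 : ℤ) = 3 * 5 ^ n - 13 - Γ ∧
      4 * (comega F ((5 ^ n - 3) / 2) (-1 : F) 1 : ℤ) = Γ + 5 ^ n + 13 ∧
      8 * (comega F ((5 ^ n - 3) / 2) (-1 : F) 2 : ℤ) = 3 * 5 ^ n - 13 - Γ ∧
      ∀ i, 3 ≤ i → comega F ((5 ^ n - 3) / 2) (-1 : F) i = 0) := by
  have h5 : (5 : F) = 0 := by
    have h := FiniteField.cast_card_eq_zero F
    rw [hF] at h
    push_cast at h
    exact pow_eq_zero_iff (by omega) |>.1 h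
  have h20 : (2 : F) ≠ 0 := two_ne_zero_of_five h5
  have hchar : ringChar F ≠ 2 := fun h => h20 (by
    have := ringChar.Nat.cast_ringChar (R := F)
    rw [h] at this
    exact_mod_cast this)
  have hmod : 5 ^ n % 8 = if Even n then 1 else 5 := by
    rcases Nat.even_or_odd' n with ⟨k, rfl | rfl⟩
    · rw [if_pos (even_two_mul k), pow_mul, Nat.pow_mod]
      norm_num
    · rw [if_neg (by simp), pow_succ, pow_mul, Nat.mul_mod, Nat.pow_mod]
      norm_num
  have hpos : 5 ≤ 5 ^ n := Nat.le_self_pow (by omega) 5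
  have hmod2 : 5 ^ n % 2 = 1 := by split_ifs at hmod <;> omega
  obtain ⟨s1, s2, s3, s4⟩ := comega_spectrum hchar h5
    (pow_eq_chi hchar (d := (5 ^ n - 3) / 2) (by omega) (by omega))
  rw [hF] at s1 s3
  rw [← hΓ] at s1
  zify at s2 s3
  push_cast at s1
  -- the parity of `n` enters only through whether `2` is a square
  have hsq := FiniteField.isSquare_two_iff (F := F)
  rw [hF, hmod] at hsq
  constructor
  · intro hev
    have hc : chi F 2 = 1 := by
      rw [if_pos hev] at hsq
      simp [chi, h20, hsq]
    rw [hc] at s1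
    exact ⟨by linarith, by linarith, by linarith, s4⟩
  · intro hodd
    have hc : chi F 2 = -1 := by
      rw [if_neg (Nat.not_even_iff_odd.2 hodd)] at hsq
      simp [chi, h20, hsq]
    rw [hc] at s1
    exact ⟨by linarith, by linarith, by linarith, s4⟩
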